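/- For every set Γ of propositional formulas and every propositional formula A: Γ ⊢_EBPC A if and only if Γ^b ⊢_KD4 A^b. -/

import Mathlib

/-! ### Modal formulas -/

inductive MF : Type
  | atom : ℕ → MF
  | bot  : MF
  | and  : MF → MF → MF
  | or   : MF → MF → MF
  | imp  : MF → MF → MF
  | neg  : MF → MF
  | box  : MF → MF
  deriving DecidableEq

namespace MF

/-- The set of atoms occurring in a modal formula. -/
def atoms : MF → Set ℕ
  | atom n => {n}
  | bot => ∅
  | and A B => atoms A ∪ atoms B
  | or A B => atoms A ∪ atoms B
  | imp A B => atoms A ∪ atoms B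
  | neg A => atoms A
  | box A => atoms A

/-- A boolean valuation on modal formulas respecting the classical connectives
(boxed formulas and atoms are treated as arbitrary). -/
def Respects (v : MF → Bool) : Prop :=
  v bot = false ∧
  (∀ A B, v (and A B) = (v A && v B)) ∧
  (∀ A B, v (or A B) = (v A || v B)) ∧
  (∀ A B, v (imp A B) = (!(v A) || v B)) ∧
  (∀ A, v (neg A) = !(v A))

/-- Classical propositional tautology (in the modal language). -/
def IsTaut (A : MF) : Prop := ∀ v, Respects v → v A = true

end MF

/-- Hilbert-style provability in the normal modal logic `K` extended by the
axiom scheme `Ax`: classical tautologies, scheme K, the extra axioms,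
modus ponens and necessitation. -/
inductive Prv (Ax : MF → Prop) : MF → Prop
  | taut {A : MF} : MF.IsTaut A → Prv Ax A
  | axK {A B : MF} : Prv Ax ((MF.box (A.imp B)).imp ((MF.box A).imp (MF.box B)))
  | extra {A : MF} : Ax A → Prv Ax A
  | mp {A B : MF} : Prv Ax (A.imp B) → Prv Ax A → Prv Ax B
  | nec {A : MF} : Prv Ax A → Prv Ax A.box

/-- Scheme 4 : □A → □□A. -/
def Ax4 (A : MF) : Prop := ∃ B, A = (MF.box B).imp (MF.box (MF.box B))
/-- Scheme T : □A → A. -/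
def AxT (A : MF) : Prop := ∃ B, A = (MF.box B).imp B
/-- Scheme D : ¬□⊥. -/
def AxD (A : MF) : Prop := A = MF.neg (MF.box MF.bot)
/-- Löb's scheme L : □(□A→A) → □A. -/
def AxGL (A : MF) : Prop := ∃ B, A = (MF.box ((MF.box B).imp B)).imp (MF.box B)

def AxK4  : MF → Prop := Ax4
def AxKD4 : MF → Prop := fun A => Ax4 A ∨ AxD A
def AxS4  : MF → Prop := fun A => Ax4 A ∨ AxT A

def PrvK   : MF → Prop := Prv (fun _ => False)
def PrvK4  : MF → Prop := Prv AxK4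
def PrvKD4 : MF → Prop := Prv AxKD4
def PrvS4  : MF → Prop := Prv AxS4
def PrvGL  : MF → Prop := Prv AxGL

/-- Conjunction of a finite list of modal formulas (empty conjunction is ⊤ := ⊥→⊥). -/
def conjL (l : List MF) : MF := l.foldr MF.and (MF.imp MF.bot MF.bot)

/-- `ModalConseq Ax Γ A` : there are B₁,…,Bₙ ∈ Γ with ⊢ (B₁∧…∧Bₙ)→A in K + Ax. -/
def ModalConseq (Ax : MF → Prop) (Γ : Set MF) (A : MF) : Prop :=
  ∃ l : List MF, (∀ B ∈ l, B ∈ Γ) ∧ Prv Ax ((conjL l).imp A)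

/-! ### Annotated modal formulas and translations -/

/-- Modal formulas with every occurrence of □ annotated by a natural number. -/
inductive AMF : Type
  | atom : ℕ → AMF
  | bot  : AMF
  | and  : AMF → AMF → AMF
  | or   : AMF → AMF → AMF
  | imp  : AMF → AMF → AMF
  | neg  : AMF → AMF
  | box  : ℕ → AMF → AMF

namespace AMF

/-- Forget the annotations. -/
def erase : AMF → MF
  | atom n => .atom n
  | bot => .bot
  | and A B => .and (erase A) (erase B)
  | or A B => .or (erase A) (erase B)
  | imp A B => .imp (erase A) (erase B)
  | neg A => .neg (erase A)
  | box _ A => .box (erase A)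

/-- The list of all annotations occurring in an annotated formula. -/
def labels : AMF → List ℕ
  | atom _ => []
  | bot => []
  | and A B => labels A ++ labels B
  | or A B => labels A ++ labels B
  | imp A B => labels A ++ labels B
  | neg A => labels A
  | box n A => n :: labels A

/-- A translation is ordered when the number assigned to each box is strictly
greater than all numbers assigned to boxes in its scope. -/
def Ordered : AMF → Prop
  | atom _ => True
  | bot => True
  | and A B => Ordered A ∧ Ordered B
  | or A B => Ordered A ∧ Ordered B
  | imp A B => Ordered A ∧ Ordered B
  | neg A => Ordered A
  | box n A => Ordered A ∧ ∀ m ∈ labels A, m < n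

end AMF

/-- `conjQ q n` is the conjunction q₀ ∧ … ∧ q_n of the atoms `q i`. -/
def conjQ (q : ℕ → ℕ) : ℕ → MF
  | 0 => .atom (q 0)
  | n+1 => (conjQ q n).and (.atom (q (n+1)))

/-- The formula `A^t`: commutes with connectives and `(□B)^t = □(q₀∧…∧q_n → B^t)`
where `n` is the annotation on that box. -/
def AMF.trans (q : ℕ → ℕ) : AMF → MF
  | .atom n => .atom n
  | .bot => .bot
  | .and A B => (trans q A).and (trans q B)
  | .or A B => (trans q A).or (trans q B)
  | .imp A B => (trans q A).imp (trans q B)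
  | .neg A => (trans q A).neg
  | .box n A => .box ((conjQ q n).imp (trans q A))

/-! ### Kripke semantics -/

/-- Classical Kripke forcing for modal formulas. -/
def Forces {W : Type} (R : W → W → Prop) (V : ℕ → W → Prop) : W → MF → Prop
  | w, .atom n => V n w
  | _, .bot => False
  | w, .and A B => Forces R V w A ∧ Forces R V w B
  | w, .or A B => Forces R V w A ∨ Forces R V w B
  | w, .imp A B => Forces R V w A → Forces R V w B
  | w, .neg A => ¬ Forces R V w A
  | w, .box A => ∀ u, R w u → Forces R V u A

/-- Cluster equivalence: `x = y`, or `x R y` and `y R x`. -/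
def ClusterEq {W : Type} (R : W → W → Prop) (x y : W) : Prop :=
  x = y ∨ (R x y ∧ R y x)

/-- A transitive frame whose clusters form a tree and in which every cluster is
a single irreflexive point or a nonempty set of reflexive points. -/
structure TreeWithClusters {W : Type} (R : W → W → Prop) : Prop where
  trans : Transitive R
  rooted : ∃ r, ∀ x, ClusterEq R r x ∨ R r x
  treelike : ∀ x y z, R x z → R y z → (ClusterEq R x y ∨ R x y ∨ R y x)
  cluster_irrefl_singleton : ∀ x, ¬ R x x → ∀ y, ClusterEq R x y → y = x
  cluster_homog : ∀ x y, ClusterEq R x y → (R x x → R y y)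

/-! ### Expansions -/

/-- `Expansion A B` : `B ∈ E(A)`, the set of expansions of `A`. -/
inductive Expansion : MF → MF → Prop
  | atom (n) : Expansion (.atom n) (.atom n)
  | bot : Expansion .bot .bot
  | and {A B D E : MF} : Expansion A D → Expansion B E → Expansion (A.and B) (D.and E)
  | or {A B D E : MF} : Expansion A D → Expansion B E → Expansion (A.or B) (D.or E)
  | imp {A B D E : MF} : Expansion A D → Expansion B E → Expansion (A.imp B) (D.imp E)
  | neg {A D : MF} : Expansion A D → Expansion A.neg D.neg
  | box {A D : MF} (l : List MF) : Expansion A D → (∀ E ∈ l, Expansion A E) →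
      Expansion A.box (MF.box (l.foldr MF.or D))

/-! ### Propositional formulas and Visser-style natural deduction -/

inductive PF : Type
  | atom : ℕ → PF
  | bot  : PF
  | and  : PF → PF → PF
  | or   : PF → PF → PF
  | imp  : PF → PF → PF
  deriving DecidableEq

def PF.top : PF := .imp .bot .bot
def PF.neg (A : PF) : PF := A.imp .bot

/-- Natural deduction derivability from a set of assumptions.  `ef` switches
the ex falso rule on/off; `Rule` is an additional rule given as a relation
between a list of premises and a conclusion.  The base system (with `ef`
and no extra rule) is Visser's BPC: ∧/∨ intro and elim, →I (discharging),
ex falso, and the formalized rules; no modus ponens. -/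
inductive Deriv (ef : Prop) (Rule : List PF → PF → Prop) : Set PF → PF → Prop
  | hyp {Γ : Set PF} {A : PF} : A ∈ Γ → Deriv ef Rule Γ A
  | andI {Γ : Set PF} {A B : PF} : Deriv ef Rule Γ A → Deriv ef Rule Γ B → Deriv ef Rule Γ (A.and B)
  | andE1 {Γ : Set PF} {A B : PF} : Deriv ef Rule Γ (A.and B) → Deriv ef Rule Γ A
  | andE2 {Γ : Set PF} {A B : PF} : Deriv ef Rule Γ (A.and B) → Deriv ef Rule Γ B
  | orI1 {Γ : Set PF} {A B : PF} : Deriv ef Rule Γ A → Deriv ef Rule Γ (A.or B)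
  | orI2 {Γ : Set PF} {A B : PF} : Deriv ef Rule Γ B → Deriv ef Rule Γ (A.or B)
  | orE {Γ : Set PF} {A B C : PF} : Deriv ef Rule Γ (A.or B) → Deriv ef Rule (insert A Γ) C →
      Deriv ef Rule (insert B Γ) C → Deriv ef Rule Γ C
  | impI {Γ : Set PF} {A B : PF} : Deriv ef Rule (insert A Γ) B → Deriv ef Rule Γ (A.imp B)
  | exfalso {Γ : Set PF} {A : PF} : ef → Deriv ef Rule Γ .bot → Deriv ef Rule Γ A
  | fAndI {Γ : Set PF} {A B C : PF} : Deriv ef Rule Γ (A.imp B) → Deriv ef Rule Γ (A.imp C) →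
      Deriv ef Rule Γ (A.imp (B.and C))
  | fOrE {Γ : Set PF} {A B C : PF} : Deriv ef Rule Γ (A.imp C) → Deriv ef Rule Γ (B.imp C) →
      Deriv ef Rule Γ ((A.or B).imp C)
  | fTr {Γ : Set PF} {A B C : PF} : Deriv ef Rule Γ (A.imp B) → Deriv ef Rule Γ (B.imp C) →
      Deriv ef Rule Γ (A.imp C)
  | extra {Γ : Set PF} {ps : List PF} {c : PF} : Rule ps c → (∀ p ∈ ps, Deriv ef Rule Γ p) → Deriv ef Rule Γ c

/-- No extra rule. -/
def RuleNone : List PF → PF → Prop := fun _ _ => False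
/-- Rule C : from A and ¬A infer ⊥. -/
def RuleC : List PF → PF → Prop := fun ps c => ∃ A : PF, ps = [A, A.neg] ∧ c = .bot
/-- Rule R (modus ponens) : from A and A→B infer B. -/
def RuleR : List PF → PF → Prop := fun ps c => ∃ A B : PF, ps = [A, A.imp B] ∧ c = B
/-- Löb's rule L : from (A∧(A→B))→B infer A→B. -/
def RuleL : List PF → PF → Prop :=
  fun ps c => ∃ A B : PF, ps = [(A.and (A.imp B)).imp B] ∧ c = A.imp B
/-- Rule C' : from ⊤→⊥ infer ⊥. -/
def RuleC' : List PF → PF → Prop := fun ps c => ps = [PF.top.imp .bot] ∧ c = .bot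
/-- Rule R' : from ⊤→A infer A. -/
def RuleR' : List PF → PF → Prop := fun ps c => ∃ A : PF, ps = [PF.top.imp A] ∧ c = A
/-- Rule L' : from (⊤→A)→A infer ⊤→A. -/
def RuleL' : List PF → PF → Prop :=
  fun ps c => ∃ A : PF, ps = [(PF.top.imp A).imp A] ∧ c = PF.top.imp A

def BPC  : Set PF → PF → Prop := Deriv True RuleNone
def EBPC : Set PF → PF → Prop := Deriv True RuleC
def IPC  : Set PF → PF → Prop := Deriv True RuleR
def FPL  : Set PF → PF → Prop := Deriv True RuleL
def MPC  : Set PF → PF → Prop := Deriv False RuleR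

/-! ### BHK translations -/

/-- The BHK translation `b`. -/
def bhk : PF → MF
  | .atom n => .box (.atom n)
  | .bot => .box .bot
  | .and A B => (bhk A).and (bhk B)
  | .or A B => (bhk A).or (bhk B)
  | .imp A B => .box ((bhk A).imp (bhk B))

/-- The weak BHK translation `w`.  The propositional atom `n` is embedded as
the modal atom `n+1`, and the fresh atom `q` (not in the propositional
language) is the modal atom `0`; `⊥^w = □q`. -/
def wtr : PF → MF
  | .atom n => .box (.atom (n+1))
  | .bot => .box (.atom 0)
  | .and A B => (wtr A).and (wtr B)
  | .or A B => (wtr A).or (wtr B)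
  | .imp A B => .box ((wtr A).imp (wtr B))

/-! ### The cut-free sequent calculus G(KD4) -/

/-- Cut-free derivability in the sequent calculus G(KD4): axioms,
structural rules (weakening, contraction, exchange), two-sided rules for
∧, ∨, →, ¬, and the modal rules □₄R and □_D R. -/
inductive GKD4 : List MF → List MF → Prop
  | ax (A) : GKD4 [A] [A]
  | axBot : GKD4 [.bot] []
  | exL {Γ Γ' Δ : List MF} : GKD4 Γ Δ → Γ.Perm Γ' → GKD4 Γ' Δ
  | exR {Γ Δ Δ' : List MF} : GKD4 Γ Δ → Δ.Perm Δ' → GKD4 Γ Δ'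
  | wL {Γ Δ : List MF} (A : MF) : GKD4 Γ Δ → GKD4 (A :: Γ) Δ
  | wR {Γ Δ : List MF} (A : MF) : GKD4 Γ Δ → GKD4 Γ (A :: Δ)
  | cL {Γ Δ : List MF} {A : MF} : GKD4 (A :: A :: Γ) Δ → GKD4 (A :: Γ) Δ
  | cR {Γ Δ : List MF} {A : MF} : GKD4 Γ (A :: A :: Δ) → GKD4 Γ (A :: Δ)
  | andL1 {Γ Δ : List MF} {A B : MF} : GKD4 (A :: Γ) Δ → GKD4 (A.and B :: Γ) Δ
  | andL2 {Γ Δ : List MF} {A B : MF} : GKD4 (B :: Γ) Δ → GKD4 (A.and B :: Γ) Δ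
  | andR {Γ₀ Δ₀ Γ₁ Δ₁ : List MF} {A B : MF} : GKD4 Γ₀ (A :: Δ₀) → GKD4 Γ₁ (B :: Δ₁) →
      GKD4 (Γ₀ ++ Γ₁) (A.and B :: (Δ₀ ++ Δ₁))
  | orL {Γ₀ Δ₀ Γ₁ Δ₁ : List MF} {A B : MF} : GKD4 (A :: Γ₀) Δ₀ → GKD4 (B :: Γ₁) Δ₁ →
      GKD4 (A.or B :: (Γ₀ ++ Γ₁)) (Δ₀ ++ Δ₁)
  | orR1 {Γ Δ : List MF} {A B : MF} : GKD4 Γ (A :: Δ) → GKD4 Γ (A.or B :: Δ)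
  | orR2 {Γ Δ : List MF} {A B : MF} : GKD4 Γ (B :: Δ) → GKD4 Γ (A.or B :: Δ)
  | impL {Γ₀ Δ₀ Γ₁ Δ₁ : List MF} {A B : MF} : GKD4 Γ₀ (A :: Δ₀) → GKD4 (B :: Γ₁) Δ₁ →
      GKD4 (A.imp B :: (Γ₀ ++ Γ₁)) (Δ₀ ++ Δ₁)
  | impR {Γ Δ : List MF} {A B : MF} : GKD4 (A :: Γ) (B :: Δ) → GKD4 Γ (A.imp B :: Δ)
  | negL {Γ Δ : List MF} {A : MF} : GKD4 Γ (A :: Δ) → GKD4 (A.neg :: Γ) Δ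
  | negR {Γ Δ : List MF} {A : MF} : GKD4 (A :: Γ) Δ → GKD4 Γ (A.neg :: Δ)
  | box4R {Γ : List MF} {A : MF} : GKD4 (Γ ++ Γ.map MF.box) [A] → GKD4 (Γ.map MF.box) [MF.box A]
  | boxDR {Γ : List MF} : GKD4 (Γ ++ Γ.map MF.box) [] → GKD4 (Γ.map MF.box) []

/-- Disjunction of a finite list of propositional formulas (empty: ⊥). -/
def disjL : List PF → PF
  | [] => .bot
  | [A] => A
  | A :: B :: r => A.or (disjL (B :: r))

/-! ### Kripke semantics for MPC -/

/-- Intuitionistic (minimal) forcing, where `⊥` has its own upward-closed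
valuation `Vbot`. -/
def MForces {W : Type} (le : W → W → Prop) (V : ℕ → W → Prop) (Vbot : W → Prop) :
    W → PF → Prop
  | w, .atom n => V n w
  | w, .bot => Vbot w
  | w, .and A B => MForces le V Vbot w A ∧ MForces le V Vbot w B
  | w, .or A B => MForces le V Vbot w A ∨ MForces le V Vbot w B
  | w, .imp A B => ∀ u, le w u → MForces le V Vbot u A → MForces le V Vbot u B

/-- The S4 valuation induced by an MPC valuation: the fresh atom `q` (modal
atom 0) gets `V(⊥)`, and the propositional atom `n` (modal atom `n+1`) gets `V(n)`. -/
def shiftVal {W : Type} (V : ℕ → W → Prop) (Vbot : W → Prop) : ℕ → W → Prop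
  | 0 => Vbot
  | n+1 => V n

/-!
Soundness of the translation is an induction on derivations in any extension of K4. The point is
that `A^b → □A^b` is provable for every `A`, so that a consequence of translated formulas may be
boxed.

Conversely, if `A` is not derivable from `Γ`, the prime theories of EBPC, with `T R U` iff `U` is
closed under the implications in `T`, form a transitive Kripke model with persistent atoms, which
rule C makes serial. It refutes `A` but is not yet a modal countermodel: `□p` may hold at `x`
although `p` fails there, because `x` need not see itself. So pass to the model of pairs `(x, y)`,
where `(x, y)` sees `(x', y')` iff `y` equals or sees `x'` and `x'` sees `y'`, reading atoms at the
first component. It is again transitive and serial, and `A^b` holds at `(x, y)` iff `A` holds at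
`y`.
-/

namespace MF

/-! ### Tautologies -/

section Respects

variable {v : MF → Bool} {A B : MF}

theorem Respects.imp_iff (hv : Respects v) :
    v (A.imp B) = true ↔ (v A = true → v B = true) := by
  rw [hv.2.2.2.1]; cases v A <;> simp

theorem Respects.conjL_iff (hv : Respects v) (l : List MF) :
    v (conjL l) = true ↔ ∀ B ∈ l, v B = true := by
  induction l with
  | nil => simp [conjL, hv.imp_iff]
  | cons A l ih =>
    rw [conjL] at ih ⊢
    simp [hv.2.1, ih]

end Respects

section Tautologies

variable (A B C : MF)

theorem isTaut_imp_self : IsTaut (A.imp A) := by grind [IsTaut, Respects]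

theorem isTaut_imp_const : IsTaut (A.imp (B.imp A)) := by grind [IsTaut, Respects]

theorem isTaut_imp_trans : IsTaut ((A.imp B).imp ((B.imp C).imp (A.imp C))) := by
  grind [IsTaut, Respects]

theorem isTaut_and_intro : IsTaut (A.imp (B.imp (A.and B))) := by grind [IsTaut, Respects]

theorem isTaut_and_left : IsTaut ((A.and B).imp A) := by grind [IsTaut, Respects]

theorem isTaut_and_right : IsTaut ((A.and B).imp B) := by grind [IsTaut, Respects]

theorem isTaut_imp_and : IsTaut ((A.imp B).imp ((A.imp C).imp (A.imp (B.and C)))) := by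
  grind [IsTaut, Respects]

theorem isTaut_uncurry : IsTaut ((A.imp (B.imp C)).imp ((A.and B).imp C)) := by
  grind [IsTaut, Respects]

theorem isTaut_or_inl : IsTaut (A.imp (A.or B)) := by grind [IsTaut, Respects]

theorem isTaut_or_inr : IsTaut (B.imp (A.or B)) := by grind [IsTaut, Respects]

theorem isTaut_or_imp : IsTaut ((A.imp C).imp ((B.imp C).imp ((A.or B).imp C))) := by
  grind [IsTaut, Respects]

theorem isTaut_bot_imp : IsTaut (bot.imp A) := by grind [IsTaut, Respects]

theorem isTaut_neg_imp_imp_bot : IsTaut (A.neg.imp (A.imp bot)) := by grind [IsTaut, Respects]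

end Tautologies

end MF

/-! ### Provability in normal modal logics -/

namespace Prv

open MF

variable {Ax : MF → Prop} {A B C : MF}

theorem mp_taut (h : IsTaut (A.imp B)) (hA : Prv Ax A) : Prv Ax B := mp (taut h) hA

theorem mp_taut₂ (h : IsTaut (A.imp (B.imp C))) (hA : Prv Ax A) (hB : Prv Ax B) : Prv Ax C :=
  mp (mp_taut h hA) hB

theorem imp_trans (hAB : Prv Ax (A.imp B)) (hBC : Prv Ax (B.imp C)) : Prv Ax (A.imp C) :=
  mp_taut₂ (isTaut_imp_trans A B C) hAB hBC

theorem imp_and (hAB : Prv Ax (A.imp B)) (hAC : Prv Ax (A.imp C)) :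
    Prv Ax (A.imp (B.and C)) :=
  mp_taut₂ (isTaut_imp_and A B C) hAB hAC

theorem or_imp (hAC : Prv Ax (A.imp C)) (hBC : Prv Ax (B.imp C)) : Prv Ax ((A.or B).imp C) :=
  mp_taut₂ (isTaut_or_imp A B C) hAC hBC

theorem box_imp_box (h : Prv Ax (A.imp B)) : Prv Ax (A.box.imp B.box) := mp axK (nec h)

theorem box_imp_box₂ (h : Prv Ax (A.imp (B.imp C))) :
    Prv Ax (A.box.imp (B.box.imp C.box)) :=
  imp_trans (box_imp_box h) axK

theorem box_bot_imp_bhk (A : PF) : Prv Ax (bot.box.imp (bhk A)) := by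
  induction A with
  | atom n => exact box_imp_box (taut (isTaut_bot_imp _))
  | bot => exact taut (isTaut_imp_self _)
  | and A B hA hB => exact imp_and hA hB
  | or A B hA _ => exact imp_trans hA (taut (isTaut_or_inl _ _))
  | imp A B => exact box_imp_box (taut (isTaut_bot_imp _))

end Prv

/-- `A` is box-stable in the normal modal logic with axioms `Ax` if `A → □A` is provable. These
are the formulas under which necessitation may be applied to a consequence. -/
def BoxStable (Ax : MF → Prop) (A : MF) : Prop := Prv Ax (A.imp A.box)

namespace BoxStable

open MF

variable {Ax : MF → Prop} {A B : MF}

theorem of_prv (h : Prv Ax A) : BoxStable Ax A := Prv.mp_taut (isTaut_imp_const _ _) h.nec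

theorem box (h4 : Ax4 ≤ Ax) (A : MF) : BoxStable Ax A.box := Prv.extra (h4 _ ⟨A, rfl⟩)

theorem and (hA : BoxStable Ax A) (hB : BoxStable Ax B) : BoxStable Ax (A.and B) := by
  have hboxes : Prv Ax ((A.and B).imp (A.box.and B.box)) :=
    .imp_and (.imp_trans (.taut (isTaut_and_left A B)) hA)
      (.imp_trans (.taut (isTaut_and_right A B)) hB)
  have hbox_and : Prv Ax (A.box.imp (B.box.imp (A.and B).box)) :=
    .box_imp_box₂ (.taut (isTaut_and_intro A B))
  exact .imp_trans hboxes (.mp_taut (isTaut_uncurry _ _ _) hbox_and)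

theorem or (hA : BoxStable Ax A) (hB : BoxStable Ax B) : BoxStable Ax (A.or B) :=
  .or_imp (.imp_trans hA (.box_imp_box (.taut (isTaut_or_inl A B))))
    (.imp_trans hB (.box_imp_box (.taut (isTaut_or_inr A B))))

theorem conjL {l : List MF} (hl : ∀ B ∈ l, BoxStable Ax B) : BoxStable Ax (conjL l) := by
  induction l with
  | nil => exact of_prv (.taut (isTaut_imp_self bot))
  | cons A l ih =>
    rw [List.forall_mem_cons] at hl
    exact hl.1.and (ih hl.2)

theorem bhk (h4 : Ax4 ≤ Ax) (A : PF) : BoxStable Ax (bhk A) := by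
  induction A with
  | atom n => exact box h4 _
  | bot => exact box h4 _
  | and A B hA hB => exact hA.and hB
  | or A B hA hB => exact hA.or hB
  | imp A B => exact box h4 _

end BoxStable

/-! ### Modal consequence -/

namespace ModalConseq

open MF

variable {Ax : MF → Prop} {Γ : Set MF} {A B C : MF}

theorem of_prv (h : Prv Ax A) : ModalConseq Ax Γ A :=
  ⟨[], by simp, .mp_taut (isTaut_imp_const _ _) h⟩

theorem of_mem (h : A ∈ Γ) : ModalConseq Ax Γ A :=
  ⟨[A], by simpa using h, .taut (isTaut_and_left _ _)⟩

theorem mp_taut₂ (h : IsTaut (A.imp (B.imp C))) (hA : ModalConseq Ax Γ A)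
    (hB : ModalConseq Ax Γ B) : ModalConseq Ax Γ C := by
  obtain ⟨l, hl, hlA⟩ := hA
  obtain ⟨m, hm, hmB⟩ := hB
  refine ⟨l ++ m, List.forall_mem_append.2 ⟨hl, hm⟩, .mp_taut₂ (fun v hv => ?_) hlA hmB⟩
  have hABC := h v hv
  simp only [hv.imp_iff, hv.conjL_iff, List.forall_mem_append] at hABC ⊢
  exact fun hlA hmB ⟨hvl, hvm⟩ => hABC (hlA hvl) (hmB hvm)

theorem mp (hAB : ModalConseq Ax Γ (A.imp B)) (hA : ModalConseq Ax Γ A) : ModalConseq Ax Γ B :=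
  mp_taut₂ (isTaut_imp_self _) hAB hA

theorem mp_prv (hAB : Prv Ax (A.imp B)) (hA : ModalConseq Ax Γ A) : ModalConseq Ax Γ B :=
  mp (of_prv hAB) hA

theorem mp_taut (h : IsTaut (A.imp B)) (hA : ModalConseq Ax Γ A) : ModalConseq Ax Γ B :=
  mp_prv (.taut h) hA

theorem imp_intro (h : ModalConseq Ax (insert A Γ) B) : ModalConseq Ax Γ (A.imp B) := by
  obtain ⟨l, hl, hlB⟩ := h
  refine ⟨l.filter (· ≠ A), fun C hC => ?_, .mp_taut (fun v hv => ?_) hlB⟩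
  · obtain ⟨hCl, hCA⟩ := List.mem_filter.1 hC
    exact (hl C hCl).resolve_left (by simpa using hCA)
  · simp only [hv.imp_iff, hv.conjL_iff]
    intro hlB hrest hA
    refine hlB fun C hC => ?_
    by_cases hCA : C = A
    · rwa [hCA]
    · exact hrest C (List.mem_filter.2 ⟨hC, by simpa using hCA⟩)

theorem box_taut₂ (h : IsTaut (A.imp (B.imp C))) (hA : ModalConseq Ax Γ A.box)
    (hB : ModalConseq Ax Γ B.box) : ModalConseq Ax Γ C.box :=
  mp (mp_prv (.box_imp_box₂ (.taut h)) hA) hB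

theorem box_of_boxStable (hΓ : ∀ B ∈ Γ, BoxStable Ax B) (h : ModalConseq Ax Γ A) :
    ModalConseq Ax Γ A.box := by
  obtain ⟨l, hl, hlA⟩ := h
  have hstable : BoxStable Ax (conjL l) := .conjL fun B hB => hΓ B (hl B hB)
  exact ⟨l, hl, .imp_trans hstable (.box_imp_box hlA)⟩

end ModalConseq

/-! ### Soundness of the translation -/

section TranslationSoundness

open MF

variable {Ax : MF → Prop} {Γ : Set PF}

theorem ModalConseq.box_of_bhk_image (h4 : Ax4 ≤ Ax) {A : MF}
    (h : ModalConseq Ax (bhk '' Γ) A) : ModalConseq Ax (bhk '' Γ) A.box :=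
  box_of_boxStable (Set.forall_mem_image.2 fun B _ => .bhk h4 B) h

theorem ModalConseq.bhk_of_deriv {ef : Prop} {Rule : List PF → PF → Prop} (h4 : Ax4 ≤ Ax)
    (hRule : ∀ {Γ : Set PF} {ps : List PF} {c : PF}, Rule ps c →
      (∀ p ∈ ps, ModalConseq Ax (bhk '' Γ) (bhk p)) → ModalConseq Ax (bhk '' Γ) (bhk c))
    {A : PF} (h : Deriv ef Rule Γ A) : ModalConseq Ax (bhk '' Γ) (bhk A) := by
  induction h with
  | hyp hA => exact of_mem (Set.mem_image_of_mem bhk hA)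
  | andI _ _ hA hB => exact mp_taut₂ (isTaut_and_intro _ _) hA hB
  | andE1 _ h => exact mp_taut (isTaut_and_left _ _) h
  | andE2 _ h => exact mp_taut (isTaut_and_right _ _) h
  | orI1 _ h => exact mp_taut (isTaut_or_inl _ _) h
  | orI2 _ h => exact mp_taut (isTaut_or_inr _ _) h
  | orE _ _ _ hor hA hB =>
    rw [Set.image_insert_eq] at hA hB
    exact mp (mp_taut₂ (isTaut_or_imp _ _ _) (imp_intro hA) (imp_intro hB)) hor
  | impI _ h =>
    rw [Set.image_insert_eq] at h
    exact box_of_bhk_image h4 (imp_intro h)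
  | exfalso _ _ h => exact mp_prv (.box_bot_imp_bhk _) h
  | fAndI _ _ hB hC => exact box_taut₂ (isTaut_imp_and _ _ _) hB hC
  | fOrE _ _ hA hB => exact box_taut₂ (isTaut_or_imp _ _ _) hA hB
  | fTr _ _ hAB hBC => exact box_taut₂ (isTaut_imp_trans _ _ _) hAB hBC
  | extra hr _ h => exact hRule hr h

theorem ModalConseq.bhk_ruleC (h4 : Ax4 ≤ Ax) (hD : AxD ≤ Ax) {ps : List PF} {c : PF}
    (hr : RuleC ps c) (h : ∀ p ∈ ps, ModalConseq Ax (bhk '' Γ) (bhk p)) :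
    ModalConseq Ax (bhk '' Γ) (bhk c) := by
  obtain ⟨A, rfl, rfl⟩ := hr
  have hA : ModalConseq Ax (bhk '' Γ) (bhk A).box := box_of_bhk_image h4 (h A (by simp))
  have hnegA : ModalConseq Ax (bhk '' Γ) ((bhk A).imp bot.box).box := h A.neg (by simp)
  have hbox_bot : ModalConseq Ax (bhk '' Γ) bot.box.box :=
    box_taut₂ (isTaut_imp_self _) hnegA hA
  have hcons : Prv Ax (bot.box.imp bot) :=
    .mp_taut (isTaut_neg_imp_imp_bot _) (.extra (hD _ rfl))
  exact mp_prv (.box_imp_box hcons) hbox_bot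

theorem modalConseq_bhk_of_ebpc {A : PF} (h : EBPC Γ A) :
    ModalConseq AxKD4 (bhk '' Γ) (bhk A) :=
  have h4 : Ax4 ≤ AxKD4 := fun _ => Or.inl
  have hD : AxD ≤ AxKD4 := fun _ => Or.inr
  .bhk_of_deriv h4 (.bhk_ruleC h4 hD) h

end TranslationSoundness

/-! ### Kripke soundness -/

section KripkeSoundness

open MF

variable {W : Type} {R : W → W → Prop} {V : ℕ → W → Prop} {Ax : MF → Prop} {A : MF}

theorem MF.IsTaut.forces (h : IsTaut A) (w : W) : Forces R V w A := by
  classical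
  have hv : Respects fun B => decide (Forces R V w B) := by
    refine ⟨decide_eq_false id, ?_, ?_, ?_, ?_⟩ <;> intros <;> grind [Forces]
  exact of_decide_eq_true (h _ hv)

theorem Prv.forces (hAx : ∀ B, Ax B → ∀ w, Forces R V w B) (h : Prv Ax A) (w : W) :
    Forces R V w A := by
  induction h generalizing w with
  | taut h => exact h.forces w
  | axK => exact fun hAB hA u hu => hAB u hu (hA u hu)
  | extra h => exact hAx _ h w
  | mp _ _ hAB hA => exact hAB w (hA w)
  | nec _ h => exact fun u _ => h u

theorem forces_of_axKD4 [IsTrans W R] (hserial : Relator.LeftTotal R) (h : AxKD4 A) (w : W) :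
    Forces R V w A := by
  obtain ⟨B, rfl⟩ | rfl := h
  · exact fun hB u hwu x hux => hB x (_root_.trans hwu hux)
  · intro hbox
    obtain ⟨u, hwu⟩ := hserial w
    exact hbox u hwu

theorem forces_conjL {w : W} {l : List MF} (h : ∀ B ∈ l, Forces R V w B) :
    Forces R V w (conjL l) := by
  induction l with
  | nil => exact id
  | cons A l ih =>
    rw [List.forall_mem_cons] at h
    exact ⟨h.1, ih h.2⟩

theorem ModalConseq.forces (hAx : ∀ B, Ax B → ∀ w, Forces R V w B) {Γ : Set MF}
    (h : ModalConseq Ax Γ A) {w : W} (hΓ : ∀ B ∈ Γ, Forces R V w B) : Forces R V w A := by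
  obtain ⟨l, hl, hlA⟩ := h
  exact hlA.forces hAx w (forces_conjL fun B hB => hΓ B (hl B hB))

end KripkeSoundness

/-! ### From models of basic logic to modal models -/

/-- Serial Kripke models of basic propositional logic. Forcing in them is `MForces R V ⊥`, in which
`R` need not be reflexive. -/
structure IsSerialBasicModel {W : Type} (R : W → W → Prop) (V : ℕ → W → Prop) : Prop
    extends IsTrans W R where
  serial : Relator.LeftTotal R
  persistent : ∀ n {x y}, R x y → V n x → V n y

/-- Accessibility in the modal model of pairs over the frame `R`: the translation `A^b` will hold
at `(x, y)` iff `A` holds at `y`. -/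
def PairRel {W : Type} (R : W → W → Prop) (a b : W × W) : Prop :=
  Relation.ReflGen R a.2 b.1 ∧ R b.1 b.2

/-- The valuation of the modal model of pairs, reading atoms at the first component. -/
def pairVal {W : Type} (V : ℕ → W → Prop) (n : ℕ) (a : W × W) : Prop := V n a.1

section Pairs

variable {W : Type} {R : W → W → Prop} {V : ℕ → W → Prop}

theorem pairRel_of_rel {x y z : W} (h : R y z) : PairRel R (x, y) (y, z) := ⟨.refl, h⟩

theorem PairRel.rel_snd [IsTrans W R] {x y u z : W} (h : PairRel R (x, y) (u, z)) : R y z := by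
  obtain ⟨hyu, huz⟩ := h
  cases hyu with
  | refl => exact huz
  | single hyu => exact _root_.trans hyu huz

instance [IsTrans W R] : IsTrans (W × W) (PairRel R) where
  trans a b c hab := by
    rintro ⟨hbc, hc⟩
    have ha : R a.2 b.2 := hab.rel_snd
    refine ⟨.single ?_, hc⟩
    rcases Relation.reflGen_iff _ _ _ |>.1 hbc with heq | hrel
    · rwa [heq]
    · exact _root_.trans ha hrel

theorem leftTotal_pairRel (hserial : Relator.LeftTotal R) : Relator.LeftTotal (PairRel R) := by
  rintro ⟨x, y⟩
  obtain ⟨z, hyz⟩ := hserial y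
  exact ⟨(y, z), pairRel_of_rel hyz⟩

theorem IsSerialBasicModel.forces_bhk_iff (hM : IsSerialBasicModel R V) (A : PF) (x y : W) :
    Forces (PairRel R) (pairVal V) (x, y) (bhk A) ↔ MForces R V ⊥ y A := by
  have := hM.toIsTrans
  induction A generalizing x y with
  | atom n =>
    constructor
    · intro h
      obtain ⟨z, hyz⟩ := hM.serial y
      exact h (y, z) (pairRel_of_rel hyz)
    · rintro h ⟨u, z⟩ ⟨hyu, _⟩
      cases hyu with
      | refl => exact h
      | single hyu => exact hM.persistent n hyu h
  | bot =>
    refine ⟨fun h => ?_, False.elim⟩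
    obtain ⟨z, hyz⟩ := hM.serial y
    exact h (y, z) (pairRel_of_rel hyz)
  | and A B hA hB => exact and_congr (hA x y) (hB x y)
  | or A B hA hB => exact or_congr (hA x y) (hB x y)
  | imp A B hA hB =>
    constructor
    · intro h z hyz hz
      exact (hB y z).1 (h (y, z) (pairRel_of_rel hyz) ((hA y z).2 hz))
    · rintro h ⟨u, z⟩ huz hz
      exact (hB u z).2 (h z huz.rel_snd ((hA u z).1 hz))

end Pairs

/-! ### Natural deduction -/

namespace Deriv

variable {ef : Prop} {Rule : List PF → PF → Prop} {Γ Δ : Set PF} {A B C : PF}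

theorem weaken (h : Deriv ef Rule Γ A) (hΓ : Γ ⊆ Δ) : Deriv ef Rule Δ A := by
  induction h generalizing Δ with
  | hyp h => exact .hyp (hΓ h)
  | andI _ _ hA hB => exact .andI (hA hΓ) (hB hΓ)
  | andE1 _ h => exact .andE1 (h hΓ)
  | andE2 _ h => exact .andE2 (h hΓ)
  | orI1 _ h => exact .orI1 (h hΓ)
  | orI2 _ h => exact .orI2 (h hΓ)
  | orE _ _ _ hor hA hB =>
    exact .orE (hor hΓ) (hA (Set.insert_subset_insert hΓ)) (hB (Set.insert_subset_insert hΓ))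
  | impI _ h => exact .impI (h (Set.insert_subset_insert hΓ))
  | exfalso hef _ h => exact .exfalso hef (h hΓ)
  | fAndI _ _ hB hC => exact .fAndI (hB hΓ) (hC hΓ)
  | fOrE _ _ hA hB => exact .fOrE (hA hΓ) (hB hΓ)
  | fTr _ _ hAB hBC => exact .fTr (hAB hΓ) (hBC hΓ)
  | extra hr _ h => exact .extra hr fun p hp => h p hp hΓ

/-- There is no modus ponens to cut with, but ∨-elimination on `A ∨ A` does it. -/
theorem cut (hA : Deriv ef Rule Γ A) (hB : Deriv ef Rule (insert A Γ) B) : Deriv ef Rule Γ B :=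
  .orE (.orI1 (B := A) hA) hB hB

theorem top : Deriv ef Rule Γ PF.top := .impI (.hyp (Set.mem_insert _ _))

theorem and_left : Deriv ef Rule {A.and B} A := .andE1 (.hyp rfl)

theorem and_right : Deriv ef Rule {A.and B} B := .andE2 (.hyp rfl)

theorem of_pair (h : Deriv ef Rule {A, B} C) : Deriv ef Rule {A.and B} C := by
  refine cut and_right (cut (and_left.weaken (Set.subset_insert _ _)) (h.weaken ?_))
  grind

theorem and_or_distrib : Deriv ef Rule {A.and (B.or C)} ((A.and B).or (A.and C)) := by
  have hA (D : PF) : Deriv ef Rule (insert D {A.and (B.or C)}) A :=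
    and_left.weaken (Set.subset_insert _ _)
  exact .orE and_right (.orI1 (.andI (hA B) (.hyp (Set.mem_insert _ _))))
    (.orI2 (.andI (hA C) (.hyp (Set.mem_insert _ _))))

end Deriv

/-! ### Prime theories -/

/-- An entailment is a transitive relation on formulas that contains one-premise derivability and
makes `∧` a meet and `∨` a join. -/
structure IsEntailment (Rule : List PF → PF → Prop) (le : PF → PF → Prop) : Prop where
  of_deriv : ∀ {A B}, Deriv True Rule {A} B → le A B
  trans : ∀ {A B C}, le A B → le B C → le A C
  le_and : ∀ {A B C}, le A B → le A C → le A (B.and C)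
  or_le : ∀ {A B C}, le A C → le B C → le (A.or B) C

/-- The prime theories of the logic with extra rule `Rule`; they are the points of its canonical
model. Closure under derivability is stated for single premises, which with `and_mem` and `top_mem`
covers all finite sets of premises. -/
structure PrimeTheory (Rule : List PF → PF → Prop) where
  carrier : Set PF
  mem_of_deriv : ∀ {A B}, A ∈ carrier → Deriv True Rule {A} B → B ∈ carrier
  and_mem : ∀ {A B}, A ∈ carrier → B ∈ carrier → A.and B ∈ carrier
  mem_or_mem : ∀ {A B}, A.or B ∈ carrier → A ∈ carrier ∨ B ∈ carrier
  top_mem : PF.top ∈ carrier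
  bot_notMem : PF.bot ∉ carrier

namespace IsEntailment

open Order

variable {Rule : List PF → PF → Prop} {le : PF → PF → Prop}

/-- The preorder on formulas given by an entailment. -/
abbrev preorder (h : IsEntailment Rule le) : Preorder PF where
  le := le
  le_refl _ := h.of_deriv (.hyp rfl)
  le_trans _ _ _ := h.trans

/-- The Lindenbaum algebra of an entailment: formulas modulo mutual entailment. -/
abbrev Lindenbaum (h : IsEntailment Rule le) : Type :=
  letI := h.preorder
  Antisymmetrization PF (· ≤ ·)

/-- The class of a formula in the Lindenbaum algebra. -/
abbrev toLindenbaum (h : IsEntailment Rule le) (A : PF) : h.Lindenbaum :=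
  letI := h.preorder
  toAntisymmetrization (· ≤ ·) A

theorem and_le_and (h : IsEntailment Rule le) {A A' B B' : PF} (hA : le A A') (hB : le B B') :
    le (A.and B) (A'.and B') :=
  h.le_and (h.trans (h.of_deriv .and_left) hA) (h.trans (h.of_deriv .and_right) hB)

theorem or_le_or (h : IsEntailment Rule le) {A A' B B' : PF} (hA : le A A') (hB : le B B') :
    le (A.or B) (A'.or B') :=
  h.or_le (h.trans hA (h.of_deriv (.orI1 (.hyp rfl))))
    (h.trans hB (h.of_deriv (.orI2 (.hyp rfl))))

instance (h : IsEntailment Rule le) : Lattice h.Lindenbaum :=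
  letI := h.preorder
  { (inferInstance : PartialOrder h.Lindenbaum) with
    inf := Quotient.map₂ PF.and fun _ _ hA _ _ hB =>
      ⟨h.and_le_and hA.1 hB.1, h.and_le_and hA.2 hB.2⟩
    sup := Quotient.map₂ PF.or fun _ _ hA _ _ hB =>
      ⟨h.or_le_or hA.1 hB.1, h.or_le_or hA.2 hB.2⟩
    inf_le_left := by rintro ⟨A⟩ ⟨B⟩; exact h.of_deriv .and_left
    inf_le_right := by rintro ⟨A⟩ ⟨B⟩; exact h.of_deriv .and_right
    le_inf := by rintro ⟨A⟩ ⟨B⟩ ⟨C⟩; exact h.le_and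
    le_sup_left := by rintro ⟨A⟩ ⟨B⟩; exact h.of_deriv (.orI1 (.hyp rfl))
    le_sup_right := by rintro ⟨A⟩ ⟨B⟩; exact h.of_deriv (.orI2 (.hyp rfl))
    sup_le := by rintro ⟨A⟩ ⟨B⟩ ⟨C⟩; exact h.or_le }

instance (h : IsEntailment Rule le) : DistribLattice h.Lindenbaum :=
  .ofInfSupLe (by rintro ⟨A⟩ ⟨B⟩ ⟨C⟩; exact h.of_deriv .and_or_distrib)

/-- The formulas outside a prime ideal of the Lindenbaum algebra form a prime theory, once they
include some `A` (hence `⊤`) and exclude some `B` (hence `⊥`). -/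
def primeTheory (h : IsEntailment Rule le) {J : Ideal h.Lindenbaum} (hJ : J.IsPrime) {A B : PF}
    (hA : h.toLindenbaum A ∉ J) (hB : h.toLindenbaum B ∈ J) : PrimeTheory Rule where
  carrier := {C | h.toLindenbaum C ∉ J}
  mem_of_deriv hC hCD hD := hC (J.lower (h.of_deriv hCD) hD)
  and_mem hC hD hCD := (hJ.mem_or_mem hCD).elim hC hD
  mem_or_mem hCD := by
    by_contra! hno
    simp only [Set.mem_ofPred_eq, not_not] at hno
    exact hCD (Ideal.sup_mem hno.1 hno.2)
  top_mem htop := hA (J.lower (h.of_deriv .top) htop)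
  bot_notMem hbot := hbot (J.lower (h.of_deriv (.exfalso trivial (.hyp rfl))) hB)

theorem exists_primeTheory (h : IsEntailment Rule le) {A B : PF} (hAB : ¬ le A B) :
    ∃ T : PrimeTheory Rule, (∀ C D, le C D → C ∈ T.carrier → D ∈ T.carrier) ∧
      A ∈ T.carrier ∧ B ∉ T.carrier := by
  have hdisj : Disjoint (PFilter.principal (h.toLindenbaum A) : Set h.Lindenbaum)
      (Ideal.principal (h.toLindenbaum B)) :=
    Set.disjoint_left.2 fun _ hA hB => hAB (PFilter.mem_principal.1 hA |>.trans hB)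
  obtain ⟨J, hJ, hBJ, hAJ⟩ := DistribLattice.prime_ideal_of_disjoint_filter_ideal hdisj
  have hA : h.toLindenbaum A ∉ J := Set.disjoint_left.1 hAJ (PFilter.mem_principal.2 le_rfl)
  have hB : h.toLindenbaum B ∈ J := Ideal.principal_le_iff.1 hBJ
  exact ⟨h.primeTheory hJ hA hB, fun C D hCD hC hD => hC (J.lower hCD hD), hA, not_not.2 hB⟩

end IsEntailment

theorem isEntailment_deriv_insert (Rule : List PF → PF → Prop) (Γ : Set PF) :
    IsEntailment Rule fun A B => Deriv True Rule (insert A Γ) B where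
  of_deriv h := h.weaken (by simp)
  trans hAB hBC := .cut hAB (hBC.weaken (Set.insert_subset_insert (Set.subset_insert _ _)))
  le_and := .andI
  or_le hA hB := .orE (.hyp (Set.mem_insert _ _))
    (hA.weaken (Set.insert_subset_insert (Set.subset_insert _ _)))
    (hB.weaken (Set.insert_subset_insert (Set.subset_insert _ _)))

theorem exists_primeTheory_of_not_deriv {Rule : List PF → PF → Prop} {Γ : Set PF} {A : PF}
    (h : ¬ Deriv True Rule Γ A) : ∃ T : PrimeTheory Rule, Γ ⊆ T.carrier ∧ A ∉ T.carrier := by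
  have htop : ¬ Deriv True Rule (insert PF.top Γ) A := fun hA => h (.cut .top hA)
  obtain ⟨T, hclosed, hT, hA⟩ := (isEntailment_deriv_insert Rule Γ).exists_primeTheory htop
  exact ⟨T, fun B hB => hclosed _ B (.hyp (Set.mem_insert_of_mem _ hB)) hT, hA⟩

/-! ### The canonical model -/

namespace PrimeTheory

variable {Rule : List PF → PF → Prop}

theorem mem_of_deriv_pair (T : PrimeTheory Rule) {A B C : PF} (hA : A ∈ T.carrier)
    (hB : B ∈ T.carrier) (h : Deriv True Rule {A, B} C) : C ∈ T.carrier :=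
  T.mem_of_deriv (T.and_mem hA hB) h.of_pair

theorem isEntailment_imp_mem (T : PrimeTheory Rule) :
    IsEntailment Rule fun A B => A.imp B ∈ T.carrier where
  of_deriv h := T.mem_of_deriv T.top_mem (.impI (h.weaken (by simp)))
  trans {_ B _} hAB hBC :=
    T.mem_of_deriv_pair hAB hBC (.fTr (B := B) (.hyp (by simp)) (.hyp (by simp)))
  le_and hB hC := T.mem_of_deriv_pair hB hC (.fAndI (.hyp (by simp)) (.hyp (by simp)))
  or_le hA hB := T.mem_of_deriv_pair hA hB (.fOrE (.hyp (by simp)) (.hyp (by simp)))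

/-- Accessibility in the canonical model: `U` is closed under the implications in `T`. -/
def Rel (T U : PrimeTheory Rule) : Prop :=
  ∀ A B, A.imp B ∈ T.carrier → A ∈ U.carrier → B ∈ U.carrier

/-- The valuation of the canonical model. -/
def val (n : ℕ) (T : PrimeTheory Rule) : Prop := .atom n ∈ T.carrier

theorem Rel.subset {T U : PrimeTheory Rule} (h : T.Rel U) : T.carrier ⊆ U.carrier := fun A hA =>
  h PF.top A (T.mem_of_deriv hA (.impI (.hyp (by simp)))) U.top_mem

instance : IsTrans (PrimeTheory Rule) Rel where
  trans _ _ _ hTU hUS A B hAB := hUS A B (hTU.subset hAB)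

theorem exists_rel_of_imp_notMem {T : PrimeTheory Rule} {A B : PF} (h : A.imp B ∉ T.carrier) :
    ∃ U : PrimeTheory Rule, T.Rel U ∧ A ∈ U.carrier ∧ B ∉ U.carrier :=
  T.isEntailment_imp_mem.exists_primeTheory h

theorem neg_top_notMem (T : PrimeTheory RuleC) : PF.top.neg ∉ T.carrier := fun h =>
  T.bot_notMem (T.mem_of_deriv_pair T.top_mem h
    (.extra ⟨PF.top, rfl, rfl⟩ fun _ hp => .hyp (by simpa using hp)))

theorem leftTotal_rel : Relator.LeftTotal (Rel (Rule := RuleC)) := fun T =>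
  let ⟨U, hTU, _⟩ := exists_rel_of_imp_notMem T.neg_top_notMem
  ⟨U, hTU⟩

theorem isSerialBasicModel : IsSerialBasicModel (Rel (Rule := RuleC)) val where
  toIsTrans := inferInstance
  serial := leftTotal_rel
  persistent _ _ _ hTU hn := hTU.subset hn

theorem mForces_iff_mem (A : PF) (T : PrimeTheory Rule) :
    MForces Rel val ⊥ T A ↔ A ∈ T.carrier := by
  induction A generalizing T with
  | atom n => exact Iff.rfl
  | bot => exact ⟨False.elim, T.bot_notMem⟩
  | and A B hA hB =>
    rw [MForces, hA, hB]
    exact ⟨fun h => T.and_mem h.1 h.2,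
      fun h => ⟨T.mem_of_deriv h .and_left, T.mem_of_deriv h .and_right⟩⟩
  | or A B hA hB =>
    rw [MForces, hA, hB]
    exact ⟨fun h => h.elim (T.mem_of_deriv · (.orI1 (.hyp rfl)))
      (T.mem_of_deriv · (.orI2 (.hyp rfl))), T.mem_or_mem⟩
  | imp A B hA hB =>
    simp only [MForces, hA, hB]
    refine ⟨fun h => ?_, fun h U hTU => hTU A B h⟩
    by_contra hAB
    obtain ⟨U, hTU, hAU, hBU⟩ := exists_rel_of_imp_notMem hAB
    exact hBU (h U hTU hAU)

end PrimeTheory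

theorem ebpc_of_forall_mForces {Γ : Set PF} {A : PF}
    (h : ∀ {W : Type} {R : W → W → Prop} {V : ℕ → W → Prop}, IsSerialBasicModel R V →
      ∀ w, (∀ B ∈ Γ, MForces R V ⊥ w B) → MForces R V ⊥ w A) : EBPC Γ A := by
  by_contra hA
  obtain ⟨T, hΓ, hAT⟩ := exists_primeTheory_of_not_deriv hA
  refine hAT ((T.mForces_iff_mem A).1 (h PrimeTheory.isSerialBasicModel T fun B hB => ?_))
  exact (T.mForces_iff_mem B).2 (hΓ hB)

theorem IsSerialBasicModel.mForces_of_modalConseq {W : Type} {R : W → W → Prop}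
    {V : ℕ → W → Prop} (hM : IsSerialBasicModel R V) {Γ : Set PF} {A : PF}
    (h : ModalConseq AxKD4 (bhk '' Γ) (bhk A)) {w : W} (hΓ : ∀ B ∈ Γ, MForces R V ⊥ w B) :
    MForces R V ⊥ w A := by
  have := hM.toIsTrans
  have hAx (B : MF) (hB : AxKD4 B) (a : W × W) : Forces (PairRel R) (pairVal V) a B :=
    forces_of_axKD4 (leftTotal_pairRel hM.serial) hB a
  rw [← hM.forces_bhk_iff A w w]
  exact h.forces hAx (Set.forall_mem_image.2 fun B hB => (hM.forces_bhk_iff B w w).2 (hΓ B hB))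

-- STATEMENT 4
theorem stmt4 (Γ : Set PF) (A : PF) :
    EBPC Γ A ↔ ModalConseq AxKD4 (bhk '' Γ) (bhk A) :=
  ⟨modalConseq_bhk_of_ebpc,
    fun h => ebpc_of_forall_mForces fun hM _ hΓ => hM.mForces_of_modalConseq h hΓ⟩
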